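/- The series ∑_{n=0}^∞ [((1/2)_n)^5 / ((1)_n)^5] · ((-1)^n / 4^n) · (20n² + 8n + 1) converges and has sum 8/π², where π is the real number pi. -/

import Mathlib

open Real

/-- `poch a n` is the rising factorial (Pochhammer symbol) `(a)ₙ = a(a+1)⋯(a+n−1)`. -/
noncomputable def poch (a : ℝ) (n : ℕ) : ℝ := (ascPochhammer ℝ n).eval a

/-- `(1/2)_n / n!`, defined by its product formula. -/
noncomputable def ra (n : ℕ) : ℝ := poch (1/2) n / poch 1 n

lemma poch_succ' (a : ℝ) (n : ℕ) : poch a (n+1) = poch a n * (a + n) := by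
  simp [poch, ascPochhammer_succ_eval]

lemma poch_one_pos (n : ℕ) : 0 < poch 1 n := by
  unfold poch
  exact ascPochhammer_pos n 1 one_pos

lemma ra_zero : ra 0 = 1 := by simp [ra, poch]

lemma ra_succ (n : ℕ) : ra (n+1) = ra n * ((n + 1/2) / (n+1)) := by
  have h := (poch_one_pos n).ne'
  have h2 : (n:ℝ) + 1 ≠ 0 := by positivity
  have h3 : (1:ℝ) + n ≠ 0 := by positivity
  unfold ra
  rw [poch_succ', poch_succ']
  field_simp
  ring

lemma ra_pos (n : ℕ) : 0 < ra n := by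
  induction n with
  | zero => simp [ra_zero]
  | succ n ih => rw [ra_succ]; positivity

lemma ra_sq_le (n : ℕ) : ra n ^ 2 * (n + 1) ≤ 1 := by
  induction n with
  | zero => simp [ra_zero]
  | succ n ih =>
    refine le_trans ?_ ih
    rw [ra_succ, mul_pow, mul_assoc]
    refine mul_le_mul_of_nonneg_left ?_ (by positivity)
    rw [div_pow, div_mul_eq_mul_div, div_le_iff₀ (by positivity)]
    push_cast
    have : (0:ℝ) ≤ n := by positivity
    nlinarith [sq_nonneg (n:ℝ)]

lemma ra_le_one (n : ℕ) : ra n ≤ 1 := by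
  induction n with
  | zero => simp [ra_zero]
  | succ n ih =>
    rw [ra_succ]
    refine mul_le_one₀ ih (by positivity) ?_
    rw [div_le_one (by positivity)]
    linarith

/-- The binomial coefficient `C(n+k,n)` as a real number. -/
noncomputable def rc (n k : ℕ) : ℝ := ((n+k).choose n : ℕ)

lemma rc_pos (n k : ℕ) : 0 < rc n k := by
  unfold rc
  exact_mod_cast Nat.choose_pos (Nat.le_add_right n k)

lemma rc_succ_left (n k : ℕ) : rc (n+1) k = rc n k * ((n+k+1) / (n+1)) := by
  have h := Nat.add_one_mul_choose_eq (n+k) n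
  have h' : ((n:ℝ)+k+1) * rc n k = rc (n+1) k * (n+1) := by
    unfold rc
    rw [show n+1+k = n+k+1 by ring]
    exact_mod_cast h
  have : (n:ℝ)+1 ≠ 0 := by positivity
  field_simp
  linarith

lemma rc_symm (n k : ℕ) : rc n k = rc k n := by
  unfold rc
  rw [add_comm k n, Nat.choose_symm_add]

lemma rc_succ_right (n k : ℕ) : rc n (k+1) = rc n k * ((n+k+1) / (k+1)) := by
  rw [rc_symm, rc_succ_left, rc_symm k n, add_comm (k:ℝ) n]

lemma rc_ge_one (n k : ℕ) : 1 ≤ rc n k := by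
  unfold rc
  exact_mod_cast Nat.choose_pos (Nat.le_add_right n k)

lemma rc_ge (n k : ℕ) : (k:ℝ) + 1 ≤ rc (n+1) k := by
  induction n with
  | zero => rw [rc_succ_left]; simp [rc]
  | succ n ih =>
    rw [rc_succ_left]
    refine ih.trans (le_mul_of_one_le_right (rc_pos _ _).le ?_)
    rw [one_le_div (by positivity)]
    have : (0:ℝ) ≤ k := by positivity
    linarith

noncomputable def rB (n k : ℕ) : ℝ := (-1/4)^n * ra n ^ 5 * ra k ^ 4 / rc n k ^ 4

noncomputable def rG (n k : ℕ) : ℝ :=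
  rB n k * (20 * (n:ℝ)^2 + 8 * n + 1 + 24 * k * n + 8 * k^2 + 4 * k)

noncomputable def rF (n k : ℕ) : ℝ := rB n k * (8 * n * (2 * n + 4 * k + 1))

lemma rWZ (n k : ℕ) : rG n (k+1) - rG n k = rF (n+1) k - rF n k := by
  unfold rG rF rB
  rw [ra_succ, ra_succ, rc_succ_left, rc_succ_right, pow_succ]
  have := (rc_pos n k).ne'
  have h1 : (n:ℝ)+1 ≠ 0 := by positivity
  have h2 : (k:ℝ)+1 ≠ 0 := by positivity
  have h3 : (n:ℝ)+k+1 ≠ 0 := by positivity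
  push_cast
  field_simp
  ring

lemma rB_bound (n k : ℕ) :
    |rB n k| * ((n:ℝ)+k+1)^2 ≤ 4 * (1/2)^n / rc n k ^ 4 := by
  have hc := rc_pos n k
  have hk := ra_pos k
  have hn := ra_pos n
  have e : |rB n k| = (1/4)^n * ra n ^ 5 * ra k ^ 4 / rc n k ^ 4 := by
    unfold rB
    rw [abs_div, abs_mul, abs_mul, abs_pow, abs_of_pos (pow_pos hn 5), abs_of_pos (pow_pos hk 4),
      abs_of_pos (pow_pos hc 4)]
    norm_num [abs_div]
  rw [e, div_mul_eq_mul_div]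
  refine div_le_div_of_nonneg_right ?_ (by positivity)
  have h1 : ra n ^ 5 ≤ 1 := pow_le_one₀ hn.le (ra_le_one n)
  have h2 : ra k ^ 4 * ((k:ℝ)+1)^2 ≤ 1 := by
    have := pow_le_one₀ (n := 2) (by positivity) (ra_sq_le k)
    calc _ = (ra k ^ 2 * ((k:ℝ)+1))^2 := by ring
      _ ≤ 1 := this
  have h3 : ((n:ℝ)+k+1)^2 ≤ (n+1)^2 * (k+1)^2 := by
    rw [← mul_pow]
    refine pow_le_pow_left₀ (by positivity) ?_ 2
    have : (0:ℝ) ≤ n * k := by positivity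
    nlinarith
  have h4 : ((n:ℝ)+1)^2 ≤ 4 * 2^n := by
    have : ∀ m : ℕ, (m+1)^2 ≤ 4 * 2^m := by
      intro m
      rcases m with _ | _ | m
      · norm_num
      · norm_num
      · induction m with
        | zero => norm_num
        | succ m ih => 
          rw [pow_succ 2 (m+1+1)]
          have hm : (m+1+1+1+1)^2 ≤ 2 * (m+1+1+1)^2 := by ring_nf; nlinarith
          linarith
    exact_mod_cast this n
  calc (1/4)^n * ra n ^ 5 * ra k ^ 4 * ((n:ℝ)+k+1)^2
      ≤ (1/4)^n * 1 * ra k ^ 4 * ((n+1)^2 * (k+1)^2) := by gcongr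
    _ = (1/4)^n * ((n:ℝ)+1)^2 * (ra k ^ 4 * ((k:ℝ)+1)^2) := by ring
    _ ≤ (1/4)^n * (4 * 2^n) * 1 := by gcongr
    _ = 4 * (1/2)^n := by
      rw [show (1/2:ℝ) = (1/4) * 2 by norm_num, mul_pow]; ring

lemma rG_bound (n k : ℕ) : ‖rG n k‖ ≤ 80 * (1/2)^n / rc n k ^ 4 := by
  have h := rB_bound n k
  have hn : (0:ℝ) ≤ n := by positivity
  have hk : (0:ℝ) ≤ k := by positivity
  unfold rG
  rw [Real.norm_eq_abs, abs_mul,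
    abs_of_nonneg (a := 20 * (n:ℝ)^2 + 8 * n + 1 + 24 * k * n + 8 * k^2 + 4 * k) (by positivity)]
  calc _ ≤ |rB n k| * (20 * ((n:ℝ)+k+1)^2) := by
        refine mul_le_mul_of_nonneg_left ?_ (abs_nonneg _)
        nlinarith [mul_nonneg hn hk, sq_nonneg (k:ℝ)]
    _ = 20 * (|rB n k| * ((n:ℝ)+k+1)^2) := by ring
    _ ≤ 20 * (4 * (1/2)^n / rc n k ^ 4) := by gcongr
    _ = _ := by ring

lemma rG_bound' (n k : ℕ) : ‖rG n k‖ ≤ 80 * (1/2)^n := by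
  refine (rG_bound n k).trans (div_le_self (by positivity) (one_le_pow₀ (rc_ge_one n k)))

lemma rF_bound (n k : ℕ) : ‖rF n k‖ ≤ 128 * (1/2)^n := by
  have h := (rB_bound n k).trans
    (div_le_self (by positivity) (one_le_pow₀ (rc_ge_one n k)))
  have hn : (0:ℝ) ≤ n := by positivity
  have hk : (0:ℝ) ≤ k := by positivity
  unfold rF
  rw [Real.norm_eq_abs, abs_mul,
    abs_of_nonneg (a := 8 * (n:ℝ) * (2 * n + 4 * k + 1)) (by positivity)]
  calc _ ≤ |rB n k| * (32 * ((n:ℝ)+k+1)^2) := by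
        refine mul_le_mul_of_nonneg_left ?_ (abs_nonneg _)
        nlinarith [mul_nonneg hn hk, sq_nonneg (k:ℝ)]
    _ = 32 * (|rB n k| * ((n:ℝ)+k+1)^2) := by ring
    _ ≤ 32 * (4 * (1/2)^n) := by gcongr
    _ = _ := by ring

lemma summable_bd (C : ℝ) : Summable (fun n : ℕ => C * (1/2:ℝ)^n) :=
  (summable_geometric_of_lt_one (by norm_num) (by norm_num)).mul_left C

lemma rG_summable (k : ℕ) : Summable (fun n => rG n k) :=
  Summable.of_norm_bounded (summable_bd 80) (fun n => rG_bound' n k)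

lemma rS_succ (k : ℕ) : ∑' n, rG n (k+1) = ∑' n, rG n k := by
  have hs : HasSum (fun n => rG n (k+1) - rG n k) (∑' n, rG n (k+1) - ∑' n, rG n k) :=
    (rG_summable (k+1)).hasSum.sub (rG_summable k).hasSum
  have h1 := hs.tendsto_sum_nat
  have h2 : Filter.Tendsto (fun N => rF N k) Filter.atTop (nhds 0) :=
    squeeze_zero_norm (fun n => rF_bound n k) (summable_bd 128).tendsto_atTop_zero
  have h3 : (fun N => ∑ n ∈ Finset.range N, (rG n (k+1) - rG n k)) = fun N => rF N k := by
    funext N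
    simp_rw [rWZ]
    rw [Finset.sum_range_sub (fun n => rF n k)]
    simp [rF]
  rw [h3] at h1
  linarith [tendsto_nhds_unique h1 h2]

lemma rS_const (k : ℕ) : ∑' n, rG n k = ∑' n, rG n 0 := by
  induction k with
  | zero => rfl
  | succ k ih => rw [rS_succ, ih]

lemma wallis_ra (k : ℕ) : ra k ^ 2 * (2 * k + 1) = (Real.Wallis.W k)⁻¹ := by
  induction k with
  | zero => simp [ra_zero, Real.Wallis.W]
  | succ k ih =>
    rw [Real.Wallis.W_succ, mul_inv, ← ih, ra_succ]
    push_cast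
    field_simp
    ring

lemma rG_zero_tendsto : Filter.Tendsto (fun k => rG 0 k) Filter.atTop (nhds (8 / π^2)) := by
  have h1 : Filter.Tendsto (fun k : ℕ => ra k ^ 2 * (2 * (k:ℝ) + 1)) Filter.atTop
      (nhds (π/2)⁻¹) := by
    simp_rw [wallis_ra]
    exact Real.Wallis.tendsto_W_nhds_pi_div_two.inv₀ (by positivity)
  have h2 : Filter.Tendsto (fun k : ℕ => ((k:ℝ) + 1)⁻¹) Filter.atTop (nhds 0) := by
    simpa using tendsto_one_div_add_atTop_nhds_zero_nat (𝕜 := ℝ)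
  have h3 : Filter.Tendsto (fun k : ℕ => ra k ^ 4) Filter.atTop (nhds 0) := by
    refine squeeze_zero (fun k => by positivity) (fun k => ?_) h2
    have hp := ra_pos k
    rw [← one_div, le_div_iff₀ (by positivity)]
    calc ra k ^ 4 * ((k:ℝ)+1) = ra k ^ 2 * (ra k ^ 2 * (k+1)) := by ring
      _ ≤ 1 * 1 := by
        gcongr
        · exact pow_le_one₀ hp.le (ra_le_one k)
        · exact ra_sq_le k
      _ = 1 := by ring
  have h4 : Filter.Tendsto (fun k : ℕ => ra k ^ 2) Filter.atTop (nhds 0) := by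
    refine squeeze_zero (fun k => by positivity) (fun k => ?_) h2
    rw [← one_div, le_div_iff₀ (by positivity)]
    exact ra_sq_le k
  have h5 := (((h1.pow 2).const_mul 2).sub ((h1.mul h4).const_mul 2)).add h3
  have e : 2 * (π/2)⁻¹^2 - 2 * ((π/2)⁻¹ * 0) + 0 = 8 / π^2 := by
    field_simp; norm_num
  rw [e] at h5
  refine h5.congr (fun k => ?_)
  simp [rG, rB, rc, ra_zero]
  ring

lemma rG_succ_tendsto (n : ℕ) : Filter.Tendsto (fun k => rG (n+1) k) Filter.atTop (nhds 0) := by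
  have h2 : Filter.Tendsto (fun k : ℕ => 80 * (1 / ((k:ℝ) + 1))) Filter.atTop (nhds 0) := by
    simpa using (tendsto_one_div_add_atTop_nhds_zero_nat (𝕜 := ℝ)).const_mul 80
  refine squeeze_zero_norm (fun k => (rG_bound (n+1) k).trans ?_) h2
  rw [mul_one_div]
  have h := rc_ge n k
  have h1 := rc_ge_one (n+1) k
  refine div_le_div₀ (by norm_num) ?_ (by positivity) (h.trans (le_self_pow₀ h1 (by norm_num)))
  have : (1/2:ℝ)^(n+1) ≤ 1 := pow_le_one₀ (by norm_num) (by norm_num)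
  linarith

lemma rS_eq : ∑' n, rG n 0 = 8 / π^2 := by
  have h : Filter.Tendsto (fun k => ∑' n, rG n k) Filter.atTop
      (nhds (∑' n : ℕ, if n = 0 then 8 / π^2 else 0)) := by
    refine tendsto_tsum_of_dominated_convergence (summable_bd 80) (fun n => ?_)
      (Filter.Eventually.of_forall fun k n => rG_bound' n k)
    rcases n with _ | n
    · simpa using rG_zero_tendsto
    · simpa using rG_succ_tendsto n
  rw [tsum_ite_eq] at h
  simp_rw [rS_const] at h
  exact tendsto_nhds_unique tendsto_const_nhds h

theorem ramanujan_like_series_20n2_8n_1 :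
    HasSum (fun n : ℕ =>
      (poch (1/2) n)^5 / (poch 1 n)^5 * ((-1)^n / 4^n) *
        (20 * (n : ℝ)^2 + 8 * n + 1))
      (8 / π^2) := by
  have h := (rG_summable 0).hasSum
  rw [rS_eq] at h
  convert h using 2 with n
  simp only [rG, rB, rc, ra_zero]
  simp [ra, div_pow]
  left
  ring
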